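/- Let $n\ge 1$, and let $I,X,Y,Z$ denote the $2\times 2$ Pauli matrices. A $k$-qubit Pauli string is a Kronecker product of $k$ matrices from $\{I,X,Y,Z\}$ (the scalar $1$ if $k=0$), and a $k$-qubit Pauli LIM is a matrix $cQ$ with $c\in\mathbb{C}\setminus\{0\}$ and $Q$ a $k$-qubit Pauli string. Vectors $\varphi,\psi\in\mathbb{C}^{2^k}$ are called Pauli-isomorphic if $A\varphi=\psi$ for some $k$-qubit Pauli LIM $A$, and $\mathrm{Stab}(\varphi)$ denotes the set of $k$-qubit Pauli LIMs $A$ with $A\varphi=\varphi$. Let $\varphi_0,\varphi_1\in\mathbb{C}^{2^{n-1}}$ be nonzero vectors such that $\varphi_0=\varphi_1$ whenever $\varphi_0$ and $\varphi_1$ are Pauli-isomorphic. Let $\lambda\in\mathbb{C}\setminus\{0\}$, let $P$ be an $(n-1)$-qubit Pauli string, and let $B$ be an $(n-1)$-qubit Pauli LIM or $B=0$. Then the vectors $w=|0\rangle\otimes\varphi_0+|1\rangle\otimes\lambda P\varphi_1$ and $v=|0\rangle\otimes\varphi_0+|1\rangle\otimes B\varphi_1$ in $\mathbb{C}^{2^n}$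 are Pauli-isomorphic if and only if there exist $s,x\in\{0,1\}$, $g_0\in\mathrm{Stab}(\varphi_0)$ and $g_1\in\mathrm{Stab}(\varphi_1)$, with $x=0$ unless $\varphi_0=\varphi_1$, such that $$B=(-1)^s\,\lambda^{(-1)^x}\,g_0\,P\,g_1 .$$ Moreover, for any such $s,x,g_0,g_1$, the matrix $$R=(X\otimes\lambda P)^x\cdot(Z^s\otimes g_0^{-1})$$ is an $n$-qubit Pauli LIM with $Rv=w$, and hence $R^{-1}w=v$. -/

import Mathlib

noncomputable section

/-- The single-qubit Pauli matrices. -/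
def pauliI : Matrix (Fin 2) (Fin 2) ℂ := 1
def pauliX : Matrix (Fin 2) (Fin 2) ℂ := !![0, 1; 1, 0]
def pauliY : Matrix (Fin 2) (Fin 2) ℂ := !![0, -Complex.I; Complex.I, 0]
def pauliZ : Matrix (Fin 2) (Fin 2) ℂ := !![1, 0; 0, -1]

/-- Kronecker product of a `2 × 2` matrix (most significant qubit) with a
`2^m × 2^m` matrix, indexed by `Fin (2^(m+1))`. -/
def kron {m : ℕ} (A : Matrix (Fin 2) (Fin 2) ℂ) (B : Matrix (Fin (2 ^ m)) (Fin (2 ^ m)) ℂ) :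
    Matrix (Fin (2 ^ (m + 1))) (Fin (2 ^ (m + 1))) ℂ := fun i j =>
  A (if (i : ℕ) < 2 ^ m then 0 else 1) (if (j : ℕ) < 2 ^ m then 0 else 1) *
    B ⟨(i : ℕ) % 2 ^ m, Nat.mod_lt _ (pow_pos (by norm_num) m)⟩
      ⟨(j : ℕ) % 2 ^ m, Nat.mod_lt _ (pow_pos (by norm_num) m)⟩

/-- `IsPauliString n M` holds iff `M` is a Kronecker product of `n` single-qubit
Pauli matrices. -/
def IsPauliString : (n : ℕ) → Matrix (Fin (2 ^ n)) (Fin (2 ^ n)) ℂ → Prop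
  | 0, M => M = 1
  | n + 1, M => ∃ Q ∈ ({pauliI, pauliX, pauliY, pauliZ} : Set (Matrix (Fin 2) (Fin 2) ℂ)),
      ∃ B, IsPauliString n B ∧ M = kron Q B

/-- An `n`-qubit Pauli LIM: a nonzero scalar multiple of an `n`-qubit Pauli string. -/
def IsPauliLIM (n : ℕ) (A : Matrix (Fin (2 ^ n)) (Fin (2 ^ n)) ℂ) : Prop :=
  ∃ (c : ℂ) (P : Matrix (Fin (2 ^ n)) (Fin (2 ^ n)) ℂ),
    c ≠ 0 ∧ IsPauliString n P ∧ A = c • P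

/-- The stabilizer set of a vector: all `n`-qubit Pauli LIMs fixing `φ`. -/
def PauliStab {n : ℕ} (φ : Fin (2 ^ n) → ℂ) : Set (Matrix (Fin (2 ^ n)) (Fin (2 ^ n)) ℂ) :=
  {A | IsPauliLIM n A ∧ A.mulVec φ = φ}

/-- Two vectors are Pauli-isomorphic if some Pauli LIM maps one to the other. -/
def PauliIso {n : ℕ} (φ ψ : Fin (2 ^ n) → ℂ) : Prop :=
  ∃ A, IsPauliLIM n A ∧ A.mulVec φ = ψ

/-- The vector `|0⟩⊗φ₀ + |1⟩⊗φ₁`: first `2^m` coordinates are `φ₀`, last are `φ₁`. -/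
def dirac {m : ℕ} (φ₀ φ₁ : Fin (2 ^ m) → ℂ) : Fin (2 ^ (m + 1)) → ℂ := fun i =>
  if h : (i : ℕ) < 2 ^ m then φ₀ ⟨i, h⟩
  else φ₁ ⟨(i : ℕ) - 2 ^ m, by
    have h1 := i.isLt
    have h2 : (2 : ℕ) ^ (m + 1) = 2 ^ m + 2 ^ m := by rw [pow_succ]; omega
    omega⟩

/-- The high-edge label `(-1)^s · λ^((-1)^x) · g₀ · P · g₁`. -/
def highLabel {m : ℕ} (lam : ℂ) (P g₀ g₁ : Matrix (Fin (2 ^ m)) (Fin (2 ^ m)) ℂ)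
    (s x : Fin 2) : Matrix (Fin (2 ^ m)) (Fin (2 ^ m)) ℂ :=
  ((-1 : ℂ) ^ (s : ℕ) * lam ^ ((-1 : ℤ) ^ (x : ℕ))) • (g₀ * P * g₁)

/-- The root label `(X ⊗ λP)^x · (Z^s ⊗ g₀⁻¹)`. -/
def rootLabel {m : ℕ} (lam : ℂ) (P g₀ : Matrix (Fin (2 ^ m)) (Fin (2 ^ m)) ℂ)
    (s x : Fin 2) : Matrix (Fin (2 ^ (m + 1))) (Fin (2 ^ (m + 1))) ℂ :=
  kron pauliX (lam • P) ^ (x : ℕ) * kron (pauliZ ^ (s : ℕ)) g₀⁻¹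

end

/-! A LIM `R` with `R v = w` exists iff `w` and `v` are Pauli-isomorphic. Up to a nonzero scalar the
single-qubit Pauli matrices are the products `X ^ x * Z ^ s`, so for every choice of `λ P` the LIMs
on `m + 1` qubits are exactly the matrices `(X ⊗ λP) ^ x * (Z ^ s ⊗ g₀⁻¹)` with `g₀` a LIM. When
`x = 0` or `φ₀ = φ₁`, the factor `(X ⊗ λP) ^ x` can be undone on `w` at the cost of replacing `λ` by
`λ ^ (-1) ^ x`; comparing the two halves of the vectors then says that `g₀` fixes `φ₀` and that
`B φ₁ = (-1) ^ s λ ^ (-1) ^ x g₀ P φ₁`, which determines `B` up to a stabilizer of `φ₁`. When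
`x = 1`, the lower halves show that `g₀⁻¹` maps `φ₀` to `φ₁`, so that `φ₀ = φ₁` by hypothesis. -/

open Matrix
open scoped Kronecker

theorem nonsing_inv_mulVec_eq_iff {ι R : Type*} [Fintype ι] [DecidableEq ι] [CommRing R]
    {A : Matrix ι ι R} (hA : IsUnit A) {v w : ι → R} : A⁻¹ *ᵥ v = w ↔ v = A *ᵥ w := by
  have hdet : IsUnit A.det := (isUnit_iff_isUnit_det A).1 hA
  constructor <;> rintro rfl
  · rw [mulVec_mulVec, mul_nonsing_inv _ hdet, one_mulVec]
  · rw [mulVec_mulVec, nonsing_inv_mul _ hdet, one_mulVec]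

section Kron

variable {m : ℕ}

/-- The identification of the index set of `ℂ² ⊗ ℂ^(2^m)` with that of `ℂ^(2^(m+1))` underlying
`kron` and `dirac`: the first component is the most significant bit. -/
def qubitEquiv (m : ℕ) : Fin 2 × Fin (2 ^ m) ≃ Fin (2 ^ (m + 1)) :=
  finProdFinEquiv.trans (finCongr (by rw [pow_succ, mul_comm]))

theorem val_qubitEquiv (b : Fin 2) (i : Fin (2 ^ m)) :
    (qubitEquiv m (b, i) : ℕ) = i + 2 ^ m * b := by
  simp [qubitEquiv]

theorem kron_eq_reindex (A : Matrix (Fin 2) (Fin 2) ℂ) (B : Matrix (Fin (2 ^ m)) (Fin (2 ^ m)) ℂ) :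
    kron A B = reindexAlgEquiv ℂ ℂ (qubitEquiv m) (A ⊗ₖ B) := by
  have high_bit (p : Fin 2 × Fin (2 ^ m)) :
      (if (qubitEquiv m p : ℕ) < 2 ^ m then (0 : Fin 2) else 1) = p.1 := by
    obtain ⟨b, i⟩ := p
    fin_cases b <;> simp [val_qubitEquiv]
  have low_bits (p : Fin 2 × Fin (2 ^ m)) : (qubitEquiv m p : ℕ) % 2 ^ m = p.2 := by
    rw [← p.eta, val_qubitEquiv, Nat.add_mul_mod_self_left, Nat.mod_eq_of_lt p.2.isLt]
  ext i j
  obtain ⟨p, rfl⟩ := (qubitEquiv m).surjective i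
  obtain ⟨q, rfl⟩ := (qubitEquiv m).surjective j
  simp [kron, high_bit, low_bits]

theorem kron_mul_kron (A C : Matrix (Fin 2) (Fin 2) ℂ)
    (B D : Matrix (Fin (2 ^ m)) (Fin (2 ^ m)) ℂ) :
    kron A B * kron C D = kron (A * C) (B * D) := by
  simp only [kron_eq_reindex, mul_kronecker_mul, map_mul]

theorem kron_one_one : kron 1 (1 : Matrix (Fin (2 ^ m)) (Fin (2 ^ m)) ℂ) = 1 := by
  rw [kron_eq_reindex, one_kronecker_one, map_one]

theorem kron_pow (A : Matrix (Fin 2) (Fin 2) ℂ) (B : Matrix (Fin (2 ^ m)) (Fin (2 ^ m)) ℂ)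
    (k : ℕ) : kron A B ^ k = kron (A ^ k) (B ^ k) := by
  induction k with
  | zero => simp only [pow_zero, kron_one_one]
  | succ k ih => simp only [pow_succ, ih, kron_mul_kron]

theorem smul_kron (c : ℂ) (A : Matrix (Fin 2) (Fin 2) ℂ)
    (B : Matrix (Fin (2 ^ m)) (Fin (2 ^ m)) ℂ) : kron (c • A) B = c • kron A B := by
  simp only [kron_eq_reindex, smul_kronecker, map_smul]

theorem kron_smul (c : ℂ) (A : Matrix (Fin 2) (Fin 2) ℂ)
    (B : Matrix (Fin (2 ^ m)) (Fin (2 ^ m)) ℂ) : kron A (c • B) = c • kron A B := by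
  simp only [kron_eq_reindex, kronecker_smul, map_smul]

theorem dirac_qubitEquiv (φ₀ φ₁ : Fin (2 ^ m) → ℂ) (b : Fin 2) (i : Fin (2 ^ m)) :
    dirac φ₀ φ₁ (qubitEquiv m (b, i)) = ![φ₀ i, φ₁ i] b := by
  fin_cases b <;> simp [dirac, val_qubitEquiv]

theorem dirac_inj {φ₀ φ₁ ψ₀ ψ₁ : Fin (2 ^ m) → ℂ} :
    dirac φ₀ φ₁ = dirac ψ₀ ψ₁ ↔ φ₀ = ψ₀ ∧ φ₁ = ψ₁ := by
  simp [funext_iff, (qubitEquiv m).surjective.forall, Prod.forall, dirac_qubitEquiv]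

theorem kron_mulVec_dirac (A : Matrix (Fin 2) (Fin 2) ℂ)
    (B : Matrix (Fin (2 ^ m)) (Fin (2 ^ m)) ℂ) (φ₀ φ₁ : Fin (2 ^ m) → ℂ) :
    kron A B *ᵥ dirac φ₀ φ₁ =
      dirac (A 0 0 • (B *ᵥ φ₀) + A 0 1 • (B *ᵥ φ₁)) (A 1 0 • (B *ᵥ φ₀) + A 1 1 • (B *ᵥ φ₁)) := by
  ext k
  obtain ⟨⟨a, i⟩, rfl⟩ := (qubitEquiv m).surjective k
  rw [kron_eq_reindex, dirac_qubitEquiv, mulVec, dotProduct, ← (qubitEquiv m).sum_comp,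
    Fintype.sum_prod_type]
  fin_cases a <;> simp [dirac_qubitEquiv, mulVec, dotProduct, Finset.mul_sum, mul_assoc]

theorem kron_pauliX_mulVec_dirac (A : Matrix (Fin (2 ^ m)) (Fin (2 ^ m)) ℂ)
    (φ₀ φ₁ : Fin (2 ^ m) → ℂ) : kron pauliX A *ᵥ dirac φ₀ φ₁ = dirac (A *ᵥ φ₁) (A *ᵥ φ₀) := by
  simp [kron_mulVec_dirac, pauliX]

theorem kron_pauliZ_pow_mulVec_dirac (A : Matrix (Fin (2 ^ m)) (Fin (2 ^ m)) ℂ) (s : ℕ)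
    (φ₀ φ₁ : Fin (2 ^ m) → ℂ) :
    kron (pauliZ ^ s) A *ᵥ dirac φ₀ φ₁ = dirac (A *ᵥ φ₀) ((-1 : ℂ) ^ s • (A *ᵥ φ₁)) := by
  have hZ : pauliZ = diagonal ![1, -1] := by ext i j; fin_cases i <;> fin_cases j <;> rfl
  simp [kron_mulVec_dirac, hZ, diagonal_pow]

end Kron

section SingleQubit

/-- The set of single-qubit Pauli matrices. -/
def pauliMatrices : Set (Matrix (Fin 2) (Fin 2) ℂ) := {pauliI, pauliX, pauliY, pauliZ}

theorem pauliX_mul_self : pauliX * pauliX = 1 := by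
  simp [pauliX, one_fin_two]

theorem pauliZ_mul_self : pauliZ * pauliZ = 1 := by
  simp [pauliZ, one_fin_two]

theorem pauliZ_mul_pauliX : pauliZ * pauliX = -(pauliX * pauliZ) := by
  simp [pauliX, pauliZ]

theorem pauliY_eq : pauliY = Complex.I • (pauliX * pauliZ) := by
  simp [pauliX, pauliY, pauliZ]

theorem mul_self_of_mem_pauliMatrices {Q : Matrix (Fin 2) (Fin 2) ℂ} (hQ : Q ∈ pauliMatrices) :
    Q * Q = 1 := by
  rcases hQ with rfl | rfl | rfl | rfl
  · exact one_mul 1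
  · exact pauliX_mul_self
  · simp [pauliY, one_fin_two]
  · exact pauliZ_mul_self

theorem mem_pauliMatrices_iff {Q : Matrix (Fin 2) (Fin 2) ℂ} :
    Q ∈ pauliMatrices ↔
      ∃ x s : Fin 2, Q = Complex.I ^ (x * s : ℕ) • (pauliX ^ (x : ℕ) * pauliZ ^ (s : ℕ)) := by
  constructor
  · rintro (rfl | rfl | rfl | rfl)
    · exact ⟨0, 0, by simp [pauliI]⟩
    · exact ⟨1, 0, by simp⟩
    · exact ⟨1, 1, by simp [pauliY_eq]⟩
    · exact ⟨0, 1, by simp⟩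
  · rintro ⟨x, s, rfl⟩
    fin_cases x <;> fin_cases s <;> simp [pauliMatrices, pauliI, pauliY_eq]

theorem pauliZ_pow_mul_pauliX_pow (s x : Fin 2) :
    pauliZ ^ (s : ℕ) * pauliX ^ (x : ℕ) =
      (-1 : ℂ) ^ (s * x : ℕ) • (pauliX ^ (x : ℕ) * pauliZ ^ (s : ℕ)) := by
  fin_cases s <;> fin_cases x <;> simp [pauliZ_mul_pauliX]

theorem pauliX_pow_mul_pauliZ_pow_mul (x s y t : Fin 2) :
    pauliX ^ (x : ℕ) * pauliZ ^ (s : ℕ) * (pauliX ^ (y : ℕ) * pauliZ ^ (t : ℕ)) =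
      (-1 : ℂ) ^ (s * y : ℕ) •
        (pauliX ^ ((x + y : Fin 2) : ℕ) * pauliZ ^ ((s + t : Fin 2) : ℕ)) := by
  have pow_val_add {A : Matrix (Fin 2) (Fin 2) ℂ} (hA : A * A = 1) (a b : Fin 2) :
      A ^ ((a + b : Fin 2) : ℕ) = A ^ (a : ℕ) * A ^ (b : ℕ) := by
    rw [Fin.val_add, ← pow_eq_pow_mod _ (by rw [sq, hA]), pow_add]
  calc
    _ = pauliX ^ (x : ℕ) * (pauliZ ^ (s : ℕ) * pauliX ^ (y : ℕ)) * pauliZ ^ (t : ℕ) := by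
      simp only [Matrix.mul_assoc]
    _ = _ := by
      simp only [pauliZ_pow_mul_pauliX_pow, pow_val_add pauliX_mul_self,
        pow_val_add pauliZ_mul_self, Matrix.mul_smul, Matrix.smul_mul, Matrix.mul_assoc]

end SingleQubit

section PauliLIM

variable {n : ℕ} {A B P : Matrix (Fin (2 ^ n)) (Fin (2 ^ n)) ℂ}

theorem IsPauliString.mul_self (hP : IsPauliString n P) : P * P = 1 := by
  induction n with
  | zero => rw [show P = 1 from hP, one_mul]
  | succ n ih =>
    obtain ⟨Q, hQ, S, hS, rfl⟩ := hP
    rw [kron_mul_kron, mul_self_of_mem_pauliMatrices hQ, ih hS, kron_one_one]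

theorem isPauliString_one : ∀ n : ℕ, IsPauliString n 1
  | 0 => rfl
  | n + 1 => ⟨pauliI, by simp, 1, isPauliString_one n, kron_one_one.symm⟩

theorem IsPauliString.isPauliLIM (hP : IsPauliString n P) : IsPauliLIM n P :=
  ⟨1, P, one_ne_zero, hP, (one_smul _ _).symm⟩

theorem IsPauliLIM.smul (hA : IsPauliLIM n A) {c : ℂ} (hc : c ≠ 0) : IsPauliLIM n (c • A) := by
  obtain ⟨d, P, hd, hP, rfl⟩ := hA
  exact ⟨c * d, P, mul_ne_zero hc hd, hP, smul_smul _ _ _⟩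

theorem isPauliLIM_zero_iff {M : Matrix (Fin (2 ^ 0)) (Fin (2 ^ 0)) ℂ} :
    IsPauliLIM 0 M ↔ ∃ c : ℂ, c ≠ 0 ∧ M = c • 1 := by
  simp [IsPauliLIM, IsPauliString]

theorem isPauliLIM_succ_iff {M : Matrix (Fin (2 ^ (n + 1))) (Fin (2 ^ (n + 1))) ℂ} :
    IsPauliLIM (n + 1) M ↔ ∃ (x s : Fin 2) (A : Matrix (Fin (2 ^ n)) (Fin (2 ^ n)) ℂ),
      IsPauliLIM n A ∧ M = kron (pauliX ^ (x : ℕ) * pauliZ ^ (s : ℕ)) A := by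
  have phase_ne_zero (x s : Fin 2) : Complex.I ^ (x * s : ℕ) ≠ 0 := pow_ne_zero _ Complex.I_ne_zero
  constructor
  · rintro ⟨c, -, hc, ⟨Q, hQ, S, hS, rfl⟩, rfl⟩
    obtain ⟨x, s, rfl⟩ := mem_pauliMatrices_iff.1 hQ
    exact ⟨x, s, _, (hS.isPauliLIM.smul (phase_ne_zero x s)).smul hc,
      by rw [smul_kron, kron_smul, kron_smul]⟩
  · rintro ⟨x, s, -, ⟨c, S, hc, hS, rfl⟩, rfl⟩
    refine ⟨c * (Complex.I ^ (x * s : ℕ))⁻¹, _, mul_ne_zero hc (inv_ne_zero (phase_ne_zero x s)),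
      ⟨_, mem_pauliMatrices_iff.2 ⟨x, s, rfl⟩, S, hS, rfl⟩, ?_⟩
    rw [smul_kron, smul_smul, inv_mul_cancel_right₀ (phase_ne_zero x s), kron_smul]

theorem IsPauliLIM.mul (hA : IsPauliLIM n A) (hB : IsPauliLIM n B) : IsPauliLIM n (A * B) := by
  induction n with
  | zero =>
    obtain ⟨c, hc, rfl⟩ := isPauliLIM_zero_iff.1 hA
    rw [smul_one_mul]
    exact hB.smul hc
  | succ n ih =>
    obtain ⟨x, s, C, hC, rfl⟩ := isPauliLIM_succ_iff.1 hA
    obtain ⟨y, t, D, hD, rfl⟩ := isPauliLIM_succ_iff.1 hB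
    rw [kron_mul_kron, pauliX_pow_mul_pauliZ_pow_mul, smul_kron]
    exact (isPauliLIM_succ_iff.2 ⟨x + y, s + t, _, ih hC hD, rfl⟩).smul
      (pow_ne_zero _ (neg_ne_zero.2 one_ne_zero))

theorem IsPauliLIM.pow (hA : IsPauliLIM n A) : ∀ k : ℕ, IsPauliLIM n (A ^ k)
  | 0 => by rw [pow_zero]; exact (isPauliString_one n).isPauliLIM
  | k + 1 => by rw [pow_succ]; exact (hA.pow k).mul hA

theorem IsPauliString.smul_mul_inv_smul (hP : IsPauliString n P) {c : ℂ} (hc : c ≠ 0) :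
    (c • P) * (c⁻¹ • P) = 1 := by
  rw [smul_mul_smul_comm, hP.mul_self, mul_inv_cancel₀ hc, one_smul]

theorem IsPauliLIM.isUnit (hA : IsPauliLIM n A) : IsUnit A := by
  obtain ⟨c, P, hc, hP, rfl⟩ := hA
  exact IsUnit.of_mul_eq_one _ (hP.smul_mul_inv_smul hc)

theorem IsPauliLIM.inv (hA : IsPauliLIM n A) : IsPauliLIM n A⁻¹ := by
  obtain ⟨c, P, hc, hP, rfl⟩ := hA
  rw [inv_eq_right_inv (hP.smul_mul_inv_smul hc)]
  exact hP.isPauliLIM.smul (inv_ne_zero hc)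

theorem pauliIso_comm {φ ψ : Fin (2 ^ n) → ℂ} : PauliIso φ ψ ↔ PauliIso ψ φ := by
  have symm {φ ψ : Fin (2 ^ n) → ℂ} : PauliIso φ ψ → PauliIso ψ φ := fun ⟨A, hA, h⟩ =>
    ⟨A⁻¹, hA.inv, (nonsing_inv_mulVec_eq_iff hA.isUnit).2 h.symm⟩
  exact ⟨symm, symm⟩

theorem mulVec_eq_mulVec_iff_exists_mem_pauliStab {φ : Fin (2 ^ n) → ℂ} (hφ : φ ≠ 0)
    (hA : IsPauliLIM n A) (hB : B = 0 ∨ IsPauliLIM n B) :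
    B *ᵥ φ = A *ᵥ φ ↔ ∃ g ∈ PauliStab φ, B = A * g := by
  constructor
  · intro h
    rcases hB with rfl | hB
    · have hAφ : A *ᵥ φ = A *ᵥ 0 := by rw [← h, zero_mulVec, mulVec_zero]
      exact absurd (mulVec_injective_of_isUnit hA.isUnit hAφ) hφ
    · refine ⟨A⁻¹ * B, ⟨hA.inv.mul hB, ?_⟩, ?_⟩
      · rw [← mulVec_mulVec, nonsing_inv_mulVec_eq_iff hA.isUnit, h]
      · rw [mul_nonsing_inv_cancel_left _ _ ((isUnit_iff_isUnit_det A).1 hA.isUnit)]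
  · rintro ⟨g, hg, rfl⟩
    rw [← mulVec_mulVec, hg.2]

end PauliLIM

section RootLabel

variable {m : ℕ} {φ₀ φ₁ ψ : Fin (2 ^ m) → ℂ} {lam : ℂ}
  {P B g₀ : Matrix (Fin (2 ^ m)) (Fin (2 ^ m)) ℂ} {s x : Fin 2}

theorem rootLabel_eq_kron (lam : ℂ) (P g₀ : Matrix (Fin (2 ^ m)) (Fin (2 ^ m)) ℂ) (s x : Fin 2) :
    rootLabel lam P g₀ s x =
      kron (pauliX ^ (x : ℕ) * pauliZ ^ (s : ℕ)) ((lam • P) ^ (x : ℕ) * g₀⁻¹) := by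
  rw [rootLabel, kron_pow, kron_mul_kron]

theorem isPauliLIM_succ_iff_exists_rootLabel (hlam : lam ≠ 0) (hP : IsPauliString m P)
    {M : Matrix (Fin (2 ^ (m + 1))) (Fin (2 ^ (m + 1))) ℂ} :
    IsPauliLIM (m + 1) M ↔ ∃ (s x : Fin 2) (g₀ : Matrix (Fin (2 ^ m)) (Fin (2 ^ m)) ℂ),
      IsPauliLIM m g₀ ∧ M = rootLabel lam P g₀ s x := by
  have hL (x : Fin 2) : IsPauliLIM m ((lam • P) ^ (x : ℕ)) := (hP.isPauliLIM.smul hlam).pow x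
  simp only [rootLabel_eq_kron, isPauliLIM_succ_iff]
  constructor
  · rintro ⟨x, s, A, hA, rfl⟩
    refine ⟨s, x, A⁻¹ * (lam • P) ^ (x : ℕ), hA.inv.mul (hL x), ?_⟩
    rw [Matrix.mul_inv_rev, nonsing_inv_nonsing_inv _ ((isUnit_iff_isUnit_det A).1 hA.isUnit),
      mul_nonsing_inv_cancel_left _ _ ((isUnit_iff_isUnit_det _).1 (hL x).isUnit)]
  · rintro ⟨s, x, g₀, hg₀, rfl⟩
    exact ⟨x, s, _, (hL x).mul hg₀.inv, rfl⟩

theorem isPauliLIM_rootLabel (hlam : lam ≠ 0) (hP : IsPauliString m P) (hg₀ : IsPauliLIM m g₀)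
    (s x : Fin 2) : IsPauliLIM (m + 1) (rootLabel lam P g₀ s x) :=
  (isPauliLIM_succ_iff_exists_rootLabel hlam hP).2 ⟨s, x, g₀, hg₀, rfl⟩

theorem kron_pauliX_pow_mulVec_dirac (hlam : lam ≠ 0) (hP : IsPauliString m P)
    (hx : φ₀ ≠ φ₁ → x = 0) :
    kron pauliX (lam • P) ^ (x : ℕ) *ᵥ dirac φ₀ (lam ^ ((-1 : ℤ) ^ (x : ℕ)) • (P *ᵥ φ₁)) =
      dirac φ₀ ((lam • P) *ᵥ φ₁) := by
  obtain rfl | ⟨rfl, rfl⟩ : x = 0 ∨ x = 1 ∧ φ₀ = φ₁ := by grind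
  · simp [smul_mulVec]
  · have hPP : (lam • P) *ᵥ (lam⁻¹ • (P *ᵥ φ₀)) = φ₀ := by
      rw [← smul_mulVec, mulVec_mulVec, hP.smul_mul_inv_smul hlam, one_mulVec]
    simp [kron_pauliX_mulVec_dirac, hPP]

theorem rootLabel_mulVec_dirac_eq_iff (hlam : lam ≠ 0) (hP : IsPauliString m P)
    (hg₀ : IsPauliLIM m g₀) (hx : φ₀ ≠ φ₁ → x = 0) :
    rootLabel lam P g₀ s x *ᵥ dirac φ₀ ψ = dirac φ₀ ((lam • P) *ᵥ φ₁) ↔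
      g₀ *ᵥ φ₀ = φ₀ ∧
        ψ = (((-1 : ℂ) ^ (s : ℕ) * lam ^ ((-1 : ℤ) ^ (x : ℕ))) • (g₀ * P)) *ᵥ φ₁ := by
  have hX : IsUnit (kron pauliX (lam • P) ^ (x : ℕ)) :=
    (isPauliLIM_succ_iff.2 ⟨1, 0, _, hP.isPauliLIM.smul hlam, by simp⟩).isUnit.pow _
  have hsign (v w : Fin (2 ^ m) → ℂ) :
      (-1 : ℂ) ^ (s : ℕ) • v = w ↔ v = (-1 : ℂ) ^ (s : ℕ) • w := by
    rcases neg_one_pow_eq_or ℂ (s : ℕ) with h | h <;> simp [h, neg_eq_iff_eq_neg]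
  rw [← kron_pauliX_pow_mulVec_dirac hlam hP hx, rootLabel, ← mulVec_mulVec,
    (mulVec_injective_of_isUnit hX).eq_iff, kron_pauliZ_pow_mulVec_dirac, dirac_inj, hsign,
    nonsing_inv_mulVec_eq_iff hg₀.isUnit, nonsing_inv_mulVec_eq_iff hg₀.isUnit, eq_comm]
  simp only [mulVec_smul, smul_mulVec, mulVec_mulVec, smul_smul]

theorem pauliIso_of_rootLabel_one_mulVec_dirac (hlam : lam ≠ 0) (hP : IsPauliString m P)
    (hg₀ : IsPauliLIM m g₀)
    (h : rootLabel lam P g₀ s 1 *ᵥ dirac φ₀ ψ = dirac φ₀ ((lam • P) *ᵥ φ₁)) : PauliIso φ₀ φ₁ := by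
  rw [rootLabel, Fin.val_one, pow_one, ← mulVec_mulVec, kron_pauliZ_pow_mulVec_dirac,
    kron_pauliX_mulVec_dirac, dirac_inj] at h
  exact ⟨g₀⁻¹, hg₀.inv, mulVec_injective_of_isUnit (hP.isPauliLIM.smul hlam).isUnit h.2⟩

theorem rootLabel_mulVec_dirac_mulVec_eq_iff (hφ₁ : φ₁ ≠ 0) (hlam : lam ≠ 0)
    (hP : IsPauliString m P) (hB : B = 0 ∨ IsPauliLIM m B) (hg₀ : IsPauliLIM m g₀)
    (hx : φ₀ ≠ φ₁ → x = 0) :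
    rootLabel lam P g₀ s x *ᵥ dirac φ₀ (B *ᵥ φ₁) = dirac φ₀ ((lam • P) *ᵥ φ₁) ↔
      g₀ ∈ PauliStab φ₀ ∧ ∃ g₁ ∈ PauliStab φ₁, B = highLabel lam P g₀ g₁ s x := by
  have hcoeff : (-1 : ℂ) ^ (s : ℕ) * lam ^ ((-1 : ℤ) ^ (x : ℕ)) ≠ 0 :=
    mul_ne_zero (pow_ne_zero _ (neg_ne_zero.2 one_ne_zero)) (zpow_ne_zero _ hlam)
  rw [rootLabel_mulVec_dirac_eq_iff hlam hP hg₀ hx,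
    mulVec_eq_mulVec_iff_exists_mem_pauliStab hφ₁ ((hg₀.mul hP.isPauliLIM).smul hcoeff) hB]
  simp [PauliStab, hg₀, highLabel]

theorem pauliIso_dirac_iff (hφ₁ : φ₁ ≠ 0) (hmerged : PauliIso φ₀ φ₁ → φ₀ = φ₁) (hlam : lam ≠ 0)
    (hP : IsPauliString m P) (hB : B = 0 ∨ IsPauliLIM m B) :
    PauliIso (dirac φ₀ ((lam • P) *ᵥ φ₁)) (dirac φ₀ (B *ᵥ φ₁)) ↔
      ∃ (s x : Fin 2) (g₀ g₁ : Matrix (Fin (2 ^ m)) (Fin (2 ^ m)) ℂ),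
        g₀ ∈ PauliStab φ₀ ∧ g₁ ∈ PauliStab φ₁ ∧ (φ₀ ≠ φ₁ → x = 0) ∧
        B = highLabel lam P g₀ g₁ s x := by
  rw [pauliIso_comm]
  constructor
  · rintro ⟨R, hR, hRv⟩
    obtain ⟨s, x, g₀, hg₀, rfl⟩ := (isPauliLIM_succ_iff_exists_rootLabel hlam hP).1 hR
    have hx : φ₀ ≠ φ₁ → x = 0 := by
      intro hne
      by_contra hx
      obtain rfl := Fin.eq_one_of_ne_zero x hx
      exact hne (hmerged (pauliIso_of_rootLabel_one_mulVec_dirac hlam hP hg₀ hRv))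
    obtain ⟨hg₀, g₁, hg₁, hBg⟩ :=
      (rootLabel_mulVec_dirac_mulVec_eq_iff hφ₁ hlam hP hB hg₀ hx).1 hRv
    exact ⟨s, x, g₀, g₁, hg₀, hg₁, hx, hBg⟩
  · rintro ⟨s, x, g₀, g₁, hg₀, hg₁, hx, hBg⟩
    exact ⟨_, isPauliLIM_rootLabel hlam hP hg₀.1 s x,
      (rootLabel_mulVec_dirac_mulVec_eq_iff hφ₁ hlam hP hB hg₀.1 hx).2 ⟨hg₀, g₁, hg₁, hBg⟩⟩

end RootLabel

/-- Characterization of the eligible high-edge labels of an `n`-qubit node, with `n = m + 1`. -/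
theorem eligible_high_edge_labels (m : ℕ)
    (φ₀ φ₁ : Fin (2 ^ m) → ℂ) (h₀ : φ₀ ≠ 0) (h₁ : φ₁ ≠ 0)
    (hmerged : PauliIso φ₀ φ₁ → φ₀ = φ₁)
    (lam : ℂ) (hlam : lam ≠ 0)
    (P : Matrix (Fin (2 ^ m)) (Fin (2 ^ m)) ℂ) (hP : IsPauliString m P)
    (B : Matrix (Fin (2 ^ m)) (Fin (2 ^ m)) ℂ) (hB : B = 0 ∨ IsPauliLIM m B) :
    (PauliIso (dirac φ₀ ((lam • P).mulVec φ₁)) (dirac φ₀ (B.mulVec φ₁)) ↔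
      ∃ (s x : Fin 2) (g₀ g₁ : Matrix (Fin (2 ^ m)) (Fin (2 ^ m)) ℂ),
        g₀ ∈ PauliStab φ₀ ∧ g₁ ∈ PauliStab φ₁ ∧ (φ₀ ≠ φ₁ → x = 0) ∧
        B = highLabel lam P g₀ g₁ s x) ∧
    (∀ (s x : Fin 2) (g₀ g₁ : Matrix (Fin (2 ^ m)) (Fin (2 ^ m)) ℂ),
        g₀ ∈ PauliStab φ₀ → g₁ ∈ PauliStab φ₁ → (φ₀ ≠ φ₁ → x = 0) →
        B = highLabel lam P g₀ g₁ s x →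
        IsPauliLIM (m + 1) (rootLabel lam P g₀ s x) ∧
        (rootLabel lam P g₀ s x).mulVec (dirac φ₀ (B.mulVec φ₁)) =
          dirac φ₀ ((lam • P).mulVec φ₁) ∧
        (rootLabel lam P g₀ s x)⁻¹.mulVec (dirac φ₀ ((lam • P).mulVec φ₁)) =
          dirac φ₀ (B.mulVec φ₁)) := by
  refine ⟨pauliIso_dirac_iff h₁ hmerged hlam hP hB, fun s x g₀ g₁ hg₀ hg₁ hx hBg => ?_⟩
  have hR : IsPauliLIM (m + 1) (rootLabel lam P g₀ s x) := isPauliLIM_rootLabel hlam hP hg₀.1 s x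
  have hRv := (rootLabel_mulVec_dirac_mulVec_eq_iff h₁ hlam hP hB hg₀.1 hx).2 ⟨hg₀, g₁, hg₁, hBg⟩
  exact ⟨hR, hRv, (nonsing_inv_mulVec_eq_iff hR.isUnit).2 hRv.symm⟩
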